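/- arXiv:1705.02212 — 3 statements merged into one kernel-verified Lean document; each statement's English description precedes it below -/
import Mathlib

section
/- Fix a mechanism m : A → A and a point x̃ ∈ A such that g ↦ C(m (g • x̃)) is μ-integrable and ⟨C⟩_{m,x̃} ≠ 0. Then the expected generic ratio of the Haar-randomized cause equals one: ∫_G ( C(m (g • x̃)) / ⟨C⟩_{m, g • x̃} ) dμ(g) = 1. In other words, if the cause is x = g • x̃ with g drawn from the Haar probability measure μ, then E_g [ C(m x) / ⟨C⟩_{m,x} ] = 1. -/
open MeasureTheory

/-- Expected Generic Contrast: `⟨C⟩_{m,x} = ∫_G C(m (g • x)) dμ(g)`. -/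
noncomputable def expectedGenericContrast {G : Type*} [Group G] [MeasurableSpace G]
    {A : Type*} [MulAction G A] (μ : Measure G) (C : A → ℝ) (m : A → A) (x : A) : ℝ :=
  ∫ g, C (m (g • x)) ∂μ

/-- the expected generic ratio of the Haar-randomized cause equals one. -/
theorem expected_generic_ratio_eq_one
    {G : Type*} [Group G] [TopologicalSpace G] [IsTopologicalGroup G] [CompactSpace G]
    [MeasurableSpace G] [BorelSpace G]
    {A : Type*} [MeasurableSpace A] [MulAction G A] [MeasurableSMul G A]
    (μ : Measure G) [μ.IsHaarMeasure] [IsProbabilityMeasure μ] [μ.IsMulRightInvariant]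
    (m : A → A) (C : A → ℝ) (xt : A)
    (hint : Integrable (fun g => C (m (g • xt))) μ)
    (hne : expectedGenericContrast μ C m xt ≠ 0) :
    ∫ g, C (m (g • xt)) / expectedGenericContrast μ C m (g • xt) ∂μ = 1 := by
  have h : ∀ g : G, expectedGenericContrast μ C m (g • xt)
      = expectedGenericContrast μ C m xt := by
    intro g
    unfold expectedGenericContrast
    simp only [smul_smul]
    exact integral_mul_right_eq_self (fun k => C (m (k • xt))) g
  simp only [h]
  rw [integral_div]
  exact div_self hne
end

section
/- Assume the contrast C is G-invariant, i.e. C(g • a) = C(a) for all g ∈ G and a ∈ A, and that g ↦ C(m (g • x)) is μ-integrable. Then for every mechanism m : A → A, every x ∈ A and all g, k ∈ G, the expected generic contrast is invariant under simultaneous conjugation of the mechanism and translation of the cause: ⟨C⟩_{m, x} = ⟨C⟩_{m_g, k • x}, where m_g : A → A is the conjugated mechanism a ↦ g • m(g⁻¹ • a). -/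
open MeasureTheory

/-- for a `G`-invariant contrast, the expected generic contrast is invariant
under simultaneous conjugation of the mechanism and translation of the cause. -/
theorem egc_conjugation_translation_invariant
    {G : Type*} [Group G] [TopologicalSpace G] [IsTopologicalGroup G] [CompactSpace G]
    [MeasurableSpace G] [BorelSpace G]
    {A : Type*} [MeasurableSpace A] [MulAction G A] [MeasurableSMul G A]
    (μ : Measure G) [μ.IsHaarMeasure] [IsProbabilityMeasure μ] [μ.IsMulRightInvariant]
    (m : A → A) (C : A → ℝ)
    (hC : ∀ (g : G) (a : A), C (g • a) = C a) (x : A)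
    (hint : Integrable (fun g => C (m (g • x))) μ) (g k : G) :
    expectedGenericContrast μ C m x
      = expectedGenericContrast μ C (fun a => g • m (g⁻¹ • a)) (k • x) := by
  unfold expectedGenericContrast
  have h1 := integral_mul_right_eq_self (μ := μ) (fun h => C (m ((g⁻¹ * h) • x))) k
  have h2 := integral_mul_left_eq_self (μ := μ) (fun h => C (m (h • x))) g⁻¹
  simp only [hC, smul_smul, mul_assoc] at h1 h2 ⊢
  exact (h1.trans h2).symm
end

section
/- Assume the contrast C is G-invariant, i.e. C(g • a) = C(a) for all g ∈ G, a ∈ A. Fix a mechanism n : A → A and x ∈ A such that g ↦ C(n(g • x)) is μ-integrable and ⟨C⟩_{n,x} ≠ 0. For g ∈ G let n_g : A → A denote the conjugated mechanism a ↦ g • n(g⁻¹ • a). Then the expected generic ratio of the Haar-randomized mechanism equals one: ∫_G ( C(n_g(x)) / ⟨C⟩_{n_g, x} ) dμ(g) = 1. In other words, if the mechanism is M = g n g⁻¹ with g drawn from the Haar probability measure, then E_g [ C(M x)/⟨C⟩_{M,x} ] = 1. -/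
open MeasureTheory

/-- the expected generic ratio of the Haar-randomized (conjugated)
mechanism equals one, for a `G`-invariant contrast. -/
theorem expected_generic_ratio_randomized_mechanism_eq_one
    {G : Type*} [Group G] [TopologicalSpace G] [IsTopologicalGroup G] [CompactSpace G]
    [MeasurableSpace G] [BorelSpace G]
    {A : Type*} [MeasurableSpace A] [MulAction G A] [MeasurableSMul G A]
    (μ : Measure G) [μ.IsHaarMeasure] [IsProbabilityMeasure μ] [μ.IsMulRightInvariant]
    (n : A → A) (C : A → ℝ) (x : A)
    (hC : ∀ (g : G) (a : A), C (g • a) = C a)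
    (hint : Integrable (fun g => C (n (g • x))) μ)
    (hne : expectedGenericContrast μ C n x ≠ 0) :
    ∫ g, C (g • n (g⁻¹ • x)) /
        expectedGenericContrast μ C (fun a => g • n (g⁻¹ • a)) x ∂μ = 1 := by
  have hconst : ∀ g : G,
      expectedGenericContrast μ C (fun a => g • n (g⁻¹ • a)) x
        = expectedGenericContrast μ C n x := by
    intro g
    unfold expectedGenericContrast
    simp only [hC, smul_smul]
    exact integral_mul_left_eq_self (fun h => C (n (h • x))) g⁻¹
  have hP : IsProbabilityMeasure μ.inv :=
    Measure.isProbabilityMeasure_map measurable_inv.aemeasurable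
  have hH : μ.inv.IsHaarMeasure :=
    { toIsFiniteMeasureOnCompacts := inferInstance
      toIsMulLeftInvariant := inferInstance
      toIsOpenPosMeasure := inferInstance }
  have hinv : μ.IsInvInvariant :=
    ⟨Measure.isHaarMeasure_eq_of_isProbabilityMeasure μ.inv μ⟩
  simp only [hconst, hC]
  rw [integral_div, integral_inv_eq_self (fun g => C (n (g • x))) μ]
  exact div_self hne
end
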